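/- Let C be a 2-reduced dg coalgebra over ℚ, A a connective (non-negatively graded) dg algebra over ℚ, and τ : C ⇝ A a twisting chain. If g : N → N' is a quasi-isomorphism between bounded below left dg C-comodules, then the induced map of twisted extensions A ⊗_τ N → A ⊗_τ N' is a quasi-isomorphism. -/

import Mathlib

open scoped TensorProduct

noncomputable section

/-- A homologically graded differential graded `ℚ`-vector space (chain complex of
`ℚ`-vector spaces presented as a graded module with a degree `-1` square-zero differential). -/
structure DGVect : Type 1 where
  carrier : Type
  [isAddCommGroup : AddCommGroup carrier]
  [isModule : Module ℚ carrier]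
  grading : ℤ → Submodule ℚ carrier
  [isDecomp : DirectSum.Decomposition grading]
  d : carrier →ₗ[ℚ] carrier
  d_mem : ∀ (n : ℤ), ∀ x ∈ grading n, d x ∈ grading (n - 1)
  d_sq : d.comp d = 0

attribute [instance] DGVect.isAddCommGroup DGVect.isModule DGVect.isDecomp

/-- The operator acting on the degree `n` graded component by `(-1)^(k*n)`. -/
def signOpOf {V : Type} [AddCommGroup V] [Module ℚ V] (g : ℤ → Submodule ℚ V)
    [DirectSum.Decomposition g] (k : ℤ) : V →ₗ[ℚ] V :=
  (DirectSum.toModule ℚ ℤ V fun n => ((-1 : ℚ) ^ (k * n)) • (g n).subtype).comp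
    (DirectSum.decomposeLinearEquiv g).toLinearMap

/-- The Koszul parity operator, acting by `(-1)^n` in degree `n`. -/
def parityOf {V : Type} [AddCommGroup V] [Module ℚ V] (g : ℤ → Submodule ℚ V)
    [DirectSum.Decomposition g] : V →ₗ[ℚ] V := signOpOf g 1

def DGVect.parity (V : DGVect) : V.carrier →ₗ[ℚ] V.carrier := parityOf V.grading

/-- A graded object is bounded below if it vanishes in all sufficiently negative degrees. -/
def DGVect.BoundedBelow (V : DGVect) : Prop := ∃ b : ℤ, ∀ n : ℤ, n < b → V.grading n = ⊥

/-- The Koszul signed braiding `v ⊗ w ↦ (-1)^{|v||w|} w ⊗ v` of graded vector spaces. -/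
def kSwapOf {V W : Type} [AddCommGroup V] [Module ℚ V] [AddCommGroup W] [Module ℚ W]
    (gV : ℤ → Submodule ℚ V) (gW : ℤ → Submodule ℚ W)
    [DirectSum.Decomposition gV] [DirectSum.Decomposition gW] :
    V ⊗[ℚ] W →ₗ[ℚ] W ⊗[ℚ] V :=
  TensorProduct.lift
    ((DirectSum.toModule ℚ ℤ (W →ₗ[ℚ] W ⊗[ℚ] V) (fun i =>
        (((DirectSum.toModule ℚ ℤ (V →ₗ[ℚ] W ⊗[ℚ] V) (fun j =>
              ((-1 : ℚ) ^ (i * j)) • ((TensorProduct.mk ℚ W V).comp (gW j).subtype))).comp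
            (DirectSum.decomposeLinearEquiv gW).toLinearMap).flip).comp
          (gV i).subtype)).comp
      (DirectSum.decomposeLinearEquiv gV).toLinearMap)

/-- The degree `n` part of the tensor product grading:
the span of the homogeneous tensors of total degree `n`. -/
def tensorGrading {V W : Type} [AddCommGroup V] [Module ℚ V] [AddCommGroup W] [Module ℚ W]
    (gV : ℤ → Submodule ℚ V) (gW : ℤ → Submodule ℚ W) (n : ℤ) : Submodule ℚ (V ⊗[ℚ] W) :=
  ⨆ p : {p : ℤ × ℤ // p.1 + p.2 = n},
    LinearMap.range (TensorProduct.map (gV p.1.1).subtype (gW p.1.2).subtype)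

/-- `f` is a quasi-isomorphism from the complex `(V, dV)` to the complex `(W, dW)`:
it induces a bijection on homology (`ker d / im d`). -/
def IsQuasiIso {V W : Type} [AddCommGroup V] [Module ℚ V] [AddCommGroup W] [Module ℚ W]
    (dV : V →ₗ[ℚ] V) (dW : W →ₗ[ℚ] W) (f : V →ₗ[ℚ] W) : Prop :=
  (∀ x : V, dV x = 0 → (∃ y, f x = dW y) → ∃ z, x = dV z) ∧
  (∀ w : W, dW w = 0 → ∃ x, dV x = 0 ∧ ∃ y, w - f x = dW y)

/-- A differential graded algebra over `ℚ`. -/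
structure DGAlgebra extends DGVect where
  mul : carrier →ₗ[ℚ] carrier →ₗ[ℚ] carrier
  one : carrier
  one_mem : one ∈ grading 0
  mul_mem : ∀ (i j : ℤ) (x y : carrier), x ∈ grading i → y ∈ grading j →
    mul x y ∈ grading (i + j)
  mul_assoc' : ∀ x y z : carrier, mul (mul x y) z = mul x (mul y z)
  one_mul' : ∀ x : carrier, mul one x = x
  mul_one' : ∀ x : carrier, mul x one = x
  leibniz : ∀ (i : ℤ) (x y : carrier), x ∈ grading i →
    d (mul x y) = mul (d x) y + ((-1 : ℚ) ^ i) • mul x (d y)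

/-- The multiplication of a dg algebra as a map out of the tensor product. -/
def DGAlgebra.mulMap (A : DGAlgebra) : A.carrier ⊗[ℚ] A.carrier →ₗ[ℚ] A.carrier :=
  TensorProduct.lift A.mul

/-- A dg algebra is connective if it is concentrated in non-negative degrees. -/
def DGAlgebra.Connective (A : DGAlgebra) : Prop := ∀ n : ℤ, n < 0 → A.grading n = ⊥

/-- A (coassociative counital) differential graded coalgebra over `ℚ`,
non-negatively graded. -/
structure DGCoalgebra extends DGVect where
  comul : carrier →ₗ[ℚ] carrier ⊗[ℚ] carrier
  counit : carrier →ₗ[ℚ] ℚ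
  nonneg : ∀ n : ℤ, n < 0 → grading n = ⊥
  comul_mem : ∀ (n : ℤ), ∀ x ∈ grading n, comul x ∈ tensorGrading grading grading n
  counit_zero : ∀ (n : ℤ), n ≠ 0 → ∀ x ∈ grading n, counit x = 0
  coassoc : (TensorProduct.assoc ℚ carrier carrier carrier).toLinearMap.comp
      ((TensorProduct.map comul LinearMap.id).comp comul)
      = (TensorProduct.map LinearMap.id comul).comp comul
  counit_comul_left : (TensorProduct.lid ℚ carrier).toLinearMap.comp
      ((TensorProduct.map counit LinearMap.id).comp comul) = LinearMap.id
  counit_comul_right : (TensorProduct.rid ℚ carrier).toLinearMap.comp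
      ((TensorProduct.map LinearMap.id counit).comp comul) = LinearMap.id
  comul_chain : comul.comp d
      = (TensorProduct.map d LinearMap.id + TensorProduct.map (parityOf grading) d).comp comul
  counit_chain : counit.comp d = 0

/-- Cocommutativity: the comultiplication is invariant under the Koszul signed twist. -/
def DGCoalgebra.Cocomm (C : DGCoalgebra) : Prop :=
  (kSwapOf C.grading C.grading).comp C.comul = C.comul

/-- A coaugmented dg coalgebra: a dg coalgebra with a coaugmentation `η : ℚ → C`,
recorded by the grouplike element `one = η 1` in degree `0`. -/
structure CoaugDGCoalgebra extends DGCoalgebra where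
  one : carrier
  one_mem : one ∈ grading 0
  counit_one : counit one = 1
  comul_one : comul one = one ⊗ₜ[ℚ] one

/-- A coaugmented dg coalgebra is 2-reduced if `C₀ = ℚ` (spanned by the coaugmentation)
and `C₁ = 0`. -/
def CoaugDGCoalgebra.TwoReduced (C : CoaugDGCoalgebra) : Prop :=
  C.grading 0 = Submodule.span ℚ {C.one} ∧ C.grading 1 = ⊥

/-- A twisting chain `τ : C ⇝ A`: a degree `-1` linear map satisfying
`d(τc) = -τ(dc) - (-1)^{|c₍₀₎|} τ(c₍₀₎)·τ(c₍₁₎)`. -/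
structure TwistingChain (C : DGCoalgebra) (A : DGAlgebra) where
  toFun : C.carrier →ₗ[ℚ] A.carrier
  mem : ∀ (n : ℤ), ∀ x ∈ C.grading n, toFun x ∈ A.grading (n - 1)
  twist : A.d.comp toFun + toFun.comp C.d
      + A.mulMap.comp ((TensorProduct.map (toFun.comp (parityOf C.grading)) toFun).comp C.comul)
      = 0

/-- A left dg module over a dg algebra. -/
structure DGModule (A : DGAlgebra) extends DGVect where
  smul : A.carrier →ₗ[ℚ] carrier →ₗ[ℚ] carrier
  smul_mem : ∀ (i j : ℤ) (a : A.carrier) (x : carrier), a ∈ A.grading i → x ∈ grading j →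
    smul a x ∈ grading (i + j)
  one_smul' : ∀ x : carrier, smul A.one x = x
  mul_smul' : ∀ (a b : A.carrier) (x : carrier), smul (A.mul a b) x = smul a (smul b x)
  leibniz : ∀ (i : ℤ) (a : A.carrier) (x : carrier), a ∈ A.grading i →
    d (smul a x) = smul (A.d a) x + ((-1 : ℚ) ^ i) • smul a (d x)

/-- The action of a dg module as a map out of the tensor product. -/
def DGModule.actionMap {A : DGAlgebra} (M : DGModule A) :
    A.carrier ⊗[ℚ] M.carrier →ₗ[ℚ] M.carrier := TensorProduct.lift M.smul

/-- A left dg comodule over a dg coalgebra. -/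
structure DGComodule (C : DGCoalgebra) extends DGVect where
  coact : carrier →ₗ[ℚ] C.carrier ⊗[ℚ] carrier
  coact_mem : ∀ (n : ℤ), ∀ x ∈ grading n, coact x ∈ tensorGrading C.grading grading n
  coassoc : (TensorProduct.assoc ℚ C.carrier C.carrier carrier).toLinearMap.comp
      ((TensorProduct.map C.comul LinearMap.id).comp coact)
      = (TensorProduct.map LinearMap.id coact).comp coact
  counit_coact : (TensorProduct.lid ℚ carrier).toLinearMap.comp
      ((TensorProduct.map C.counit LinearMap.id).comp coact) = LinearMap.id
  coact_chain : coact.comp d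
      = (TensorProduct.map C.d LinearMap.id + TensorProduct.map (parityOf C.grading) d).comp coact

/-- Morphisms of dg modules: degree `0` graded chain maps commuting with the action. -/
def IsModuleHom (A : DGAlgebra) (M M' : DGModule A)
    (g : M.carrier →ₗ[ℚ] M'.carrier) : Prop :=
  (∀ (n : ℤ), ∀ x ∈ M.grading n, g x ∈ M'.grading n) ∧
  g.comp M.d = M'.d.comp g ∧
  g.comp M.actionMap = M'.actionMap.comp (TensorProduct.map LinearMap.id g)

/-- Morphisms of dg comodules: degree `0` graded chain maps commuting with the coaction. -/
def IsComoduleHom (C : DGCoalgebra) (N N' : DGComodule C)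
    (f : N.carrier →ₗ[ℚ] N'.carrier) : Prop :=
  (∀ (n : ℤ), ∀ x ∈ N.grading n, f x ∈ N'.grading n) ∧
  f.comp N.d = N'.d.comp f ∧
  (TensorProduct.map LinearMap.id f).comp N.coact = N'.coact.comp f

/-- The `A`-action on a twisted extension `A ⊗_τ N`: multiplication on the first factor. -/
def extAction (A : DGAlgebra) (N : Type) [AddCommGroup N] [Module ℚ N] :
    A.carrier ⊗[ℚ] (A.carrier ⊗[ℚ] N) →ₗ[ℚ] A.carrier ⊗[ℚ] N :=
  (TensorProduct.map A.mulMap LinearMap.id).comp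
    (TensorProduct.assoc ℚ A.carrier A.carrier N).symm.toLinearMap

/-- The differential of the twisted extension `A ⊗_τ N`:
`d(a ⊗ n) = da ⊗ n + (-1)^{|a|} a ⊗ dn - (-1)^{|a|} a·τ(n₍₀₎) ⊗ n₍₁₎`
for a `C`-comodule `(N, dN, ρ)`. -/
def extDiff (C : DGCoalgebra) (A : DGAlgebra) (τ : TwistingChain C A)
    (N : Type) [AddCommGroup N] [Module ℚ N]
    (dN : N →ₗ[ℚ] N) (ρ : N →ₗ[ℚ] C.carrier ⊗[ℚ] N) :
    A.carrier ⊗[ℚ] N →ₗ[ℚ] A.carrier ⊗[ℚ] N :=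
  TensorProduct.map A.d LinearMap.id + TensorProduct.map (parityOf A.grading) dN
    - (TensorProduct.map
        (A.mulMap.comp (TensorProduct.map (parityOf A.grading) τ.toFun)) LinearMap.id).comp
        ((TensorProduct.assoc ℚ A.carrier C.carrier N).symm.toLinearMap.comp
          (TensorProduct.map LinearMap.id ρ))

/-- The `C`-coaction on a twisted coextension `C ⊗^τ M`, namely `Δ ⊗ id`. -/
def coextCoact (C : DGCoalgebra) (M : Type) [AddCommGroup M] [Module ℚ M] :
    C.carrier ⊗[ℚ] M →ₗ[ℚ] C.carrier ⊗[ℚ] (C.carrier ⊗[ℚ] M) :=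
  (TensorProduct.assoc ℚ C.carrier C.carrier M).toLinearMap.comp
    (TensorProduct.map C.comul LinearMap.id)

/-- The differential of the twisted coextension `C ⊗^τ M`, expressed in terms of the map
`tact : C ⊗ M → M`, `c ⊗ m ↦ τ(c)·m`:
`d(c ⊗ m) = dc ⊗ m + (-1)^{|c|} c ⊗ dm + (-1)^{|c₍₀₎|} c₍₀₎ ⊗ τ(c₍₁₎)·m`. -/
def coextDiffFrom (C : DGCoalgebra) (M : Type) [AddCommGroup M] [Module ℚ M]
    (dM : M →ₗ[ℚ] M) (tact : C.carrier ⊗[ℚ] M →ₗ[ℚ] M) :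
    C.carrier ⊗[ℚ] M →ₗ[ℚ] C.carrier ⊗[ℚ] M :=
  TensorProduct.map C.d LinearMap.id + TensorProduct.map (parityOf C.grading) dM
    + (TensorProduct.map (parityOf C.grading) tact).comp (coextCoact C M)

/-- The differential of the twisted coextension `C ⊗^τ M` of an `A`-module `(M, dM, act)`. -/
def coextDiff (C : DGCoalgebra) (A : DGAlgebra) (τ : TwistingChain C A)
    (M : Type) [AddCommGroup M] [Module ℚ M]
    (dM : M →ₗ[ℚ] M) (act : A.carrier ⊗[ℚ] M →ₗ[ℚ] M) :
    C.carrier ⊗[ℚ] M →ₗ[ℚ] C.carrier ⊗[ℚ] M :=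
  coextDiffFrom C M dM (act.comp (TensorProduct.map τ.toFun LinearMap.id))

/-- Morphisms of dg algebras. -/
structure DGAlgebraHom (A B : DGAlgebra) where
  toLinearMap : A.carrier →ₗ[ℚ] B.carrier
  mem : ∀ (n : ℤ), ∀ x ∈ A.grading n, toLinearMap x ∈ B.grading n
  chain : toLinearMap.comp A.d = B.d.comp toLinearMap
  map_one : toLinearMap A.one = B.one
  map_mul : ∀ x y : A.carrier, toLinearMap (A.mul x y) = B.mul (toLinearMap x) (toLinearMap y)

/-- Data exhibiting a dg algebra as the cobar construction `ΩC` of a coaugmented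
dg coalgebra `C`, via the universal twisting chain `t : C ⇝ ΩC`:
dg algebra maps `ΩC → A` correspond bijectively to twisting chains `C ⇝ A`
vanishing on the coaugmentation. -/
structure CobarData (C : CoaugDGCoalgebra) where
  alg : DGAlgebra
  t : TwistingChain C.toDGCoalgebra alg
  t_one : t.toFun C.one = 0
  univ : ∀ (A : DGAlgebra) (τ : TwistingChain C.toDGCoalgebra A), τ.toFun C.one = 0 →
    ∃! F : DGAlgebraHom alg A, F.toLinearMap.comp t.toFun = τ.toFun

/-- A morphism of `C`-comodules is a `t`-equivalence if the induced morphism of twisted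
extensions `ΩC ⊗_t N → ΩC ⊗_t M` is a quasi-isomorphism. -/
def IsTEquiv (C : CoaugDGCoalgebra) (Ω : CobarData C) (N M : DGComodule C.toDGCoalgebra)
    (f : N.carrier →ₗ[ℚ] M.carrier) : Prop :=
  IsQuasiIso (extDiff C.toDGCoalgebra Ω.alg Ω.t N.carrier N.d N.coact)
    (extDiff C.toDGCoalgebra Ω.alg Ω.t M.carrier M.d M.coact)
    (TensorProduct.map LinearMap.id f)

/-!
The mapping cone of `g` is a bounded below comodule which is acyclic because `g` is a
quasi-isomorphism, and `A ⊗_τ cone(g)` is the cone of `A ⊗_τ N → A ⊗_τ N'`. So it suffices that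
`A ⊗_τ N` is acyclic whenever `N` is bounded below and acyclic. Over a field such an `N` has a
contraction `h` of degree `1`, and `H(a ⊗ n) = (-1)^{|a|} a ⊗ hn` contracts the untwisted complex
`A ⊗ N`. Since `τ` vanishes in degrees at most `1`, the twisting term lowers the degree of the
`N`-factor by at least `2`, while `h` raises it by `1`. Hence `1 - (DH + HD)` strictly lowers a
bounded below filtration, so it is locally nilpotent. It also sends a cycle to a homologous cycle,
so iterating it shows that every cycle is a boundary.
-/

section Homotopy

theorem exists_contraction_of_exact {K M : Type*} [DivisionRing K] [AddCommGroup M] [Module K M]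
    {d : M →ₗ[K] M} (hd : Function.Exact d d) :
    ∃ h : M →ₗ[K] M, d ∘ₗ h + h ∘ₗ d = LinearMap.id := by
  obtain ⟨s₀, hs₀⟩ := d.rangeRestrict.exists_rightInverse_of_surjective d.range_rangeRestrict
  obtain ⟨s, hs⟩ := s₀.exists_extend
  have d_s_of_cycle : ∀ x, d x = 0 → d (s x) = x := fun x hx => by
    obtain ⟨y, rfl⟩ := (hd x).1 hx
    have hsy : s (d y) = s₀ (d.rangeRestrict y) := LinearMap.congr_fun hs (d.rangeRestrict y)
    exact hsy ▸ congrArg Subtype.val (LinearMap.congr_fun hs₀ (d.rangeRestrict y))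
  refine ⟨s - s ∘ₗ s ∘ₗ d, LinearMap.ext fun x => ?_⟩
  have hdsd : d (s (d x)) = d x := d_s_of_cycle _ (hd.apply_apply_eq_zero x)
  have hcycle : d (s (x - s (d x))) = x - s (d x) :=
    d_s_of_cycle _ (by rw [map_sub, hdsd, sub_self])
  rw [map_sub, map_sub] at hcycle
  simp [hcycle, hd.apply_apply_eq_zero]

variable {R M : Type*} [Ring R] [AddCommGroup M] [Module R M]

theorem exact_of_homotopy_pow_apply_eq_zero {d h : Module.End R M} (hd : d * d = 0)
    (hE : ∀ x, ∃ k : ℕ, ((1 - (d * h + h * d)) ^ k) x = 0) : Function.Exact d d := by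
  have hdd : ∀ x, d (d x) = 0 := LinearMap.congr_fun hd
  suffices ∀ (k : ℕ) (x : M), d x = 0 → ((1 - (d * h + h * d)) ^ k) x = 0 → x ∈ Set.range d by
    refine fun x => ⟨fun hx => ?_, ?_⟩
    · obtain ⟨k, hk⟩ := hE x
      exact this k x hx hk
    · rintro ⟨y, rfl⟩
      exact hdd y
  intro k
  induction k with
  | zero => exact fun x _ hx => ⟨0, by simpa using hx.symm⟩
  | succ k ih =>
    intro x hx hk
    have herror : (1 - (d * h + h * d)) x = x - d (h x) := by simp [hx]
    rw [pow_succ, Module.End.mul_apply, herror] at hk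
    obtain ⟨y, hy⟩ := ih _ (by rw [map_sub, hx, hdd, sub_zero]) hk
    exact ⟨y + h x, by rw [map_add, hy, sub_add_cancel]⟩

theorem exists_pow_apply_eq_zero_of_lowers_filtration {E : Module.End R M}
    {F : ℤ → Submodule R M} {b : ℤ} (hF : ∀ p < b, F p = ⊥)
    (hE : ∀ p, ∀ x ∈ F p, E x ∈ F (p - 1)) {p : ℤ} {x : M} (hx : x ∈ F p) :
    ∃ k : ℕ, (E ^ k) x = 0 := by
  have hpow : ∀ k : ℕ, (E ^ k) x ∈ F (p - k) := fun k => by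
    induction k with
    | zero => simpa using hx
    | succ k ih =>
      rw [pow_succ', Module.End.mul_apply, Nat.cast_succ, ← sub_sub]
      exact hE _ _ ih
  refine ⟨(p - b).toNat + 1, ?_⟩
  have := hpow ((p - b).toNat + 1)
  rwa [hF _ (by omega), Submodule.mem_bot] at this

end Homotopy

section HomogeneousPart

variable {R ι κ V W : Type*} [Semiring R] [DecidableEq ι] [DecidableEq κ]
  [AddCommMonoid V] [Module R V] [AddCommMonoid W] [Module R W]
  (gV : ι → Submodule R V) [DirectSum.Decomposition gV]
  (gW : κ → Submodule R W) [DirectSum.Decomposition gW]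

variable {gV} in
theorem linearMap_ext_of_homogeneous {f g : V →ₗ[R] W} (h : ∀ i, ∀ x ∈ gV i, f x = g x) :
    f = g :=
  DirectSum.decompose_lhom_ext gV fun i => LinearMap.ext fun x => h i x x.2

/-- The projection of a graded module onto its component of degree `i`, as an endomorphism. -/
def homogeneousProj (i : ι) : V →ₗ[R] V :=
  (gV i).subtype ∘ₗ DirectSum.component R ι (fun i => gV i) i ∘ₗ
    (DirectSum.decomposeLinearEquiv gV).toLinearMap

theorem homogeneousProj_mem (i : ι) (x : V) : homogeneousProj gV i x ∈ gV i :=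
  (DirectSum.decompose gV x i).2

variable {gV} in
theorem homogeneousProj_of_mem {i : ι} {x : V} (hx : x ∈ gV i) : homogeneousProj gV i x = x :=
  DirectSum.decompose_of_mem_same gV hx

variable {gV} in
theorem homogeneousProj_of_mem_ne {i j : ι} {x : V} (hx : x ∈ gV i) (hij : i ≠ j) :
    homogeneousProj gV j x = 0 :=
  DirectSum.decompose_of_mem_ne gV hx hij

variable {gV gW} in
theorem map_homogeneousProj {e : V →ₗ[R] W} {φ : ι → κ} (hφ : Function.Injective φ)
    (he : ∀ i, ∀ x ∈ gV i, e x ∈ gW (φ i)) (i : ι) (x : V) :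
    e (homogeneousProj gV i x) = homogeneousProj gW (φ i) (e x) := by
  suffices e ∘ₗ homogeneousProj gV i = homogeneousProj gW (φ i) ∘ₗ e from
    LinearMap.congr_fun this x
  refine linearMap_ext_of_homogeneous (gV := gV) fun j y hy => ?_
  rw [LinearMap.comp_apply, LinearMap.comp_apply]
  obtain rfl | hij := eq_or_ne j i
  · rw [homogeneousProj_of_mem hy, homogeneousProj_of_mem (he j y hy)]
  · rw [homogeneousProj_of_mem_ne hy hij, homogeneousProj_of_mem_ne (he j y hy) (hφ.ne hij),
      map_zero]

/-- The part of a linear map between graded modules that sends degree `i` to degree `φ i`. -/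
def homogeneousPart (φ : ι → κ) (f : V →ₗ[R] W) : V →ₗ[R] W :=
  DirectSum.toModule R ι W (fun i => homogeneousProj gW (φ i) ∘ₗ f ∘ₗ (gV i).subtype) ∘ₗ
    (DirectSum.decomposeLinearEquiv gV).toLinearMap

variable {gV} in
theorem homogeneousPart_apply (φ : ι → κ) (f : V →ₗ[R] W) {i : ι} {x : V} (hx : x ∈ gV i) :
    homogeneousPart gV gW φ f x = homogeneousProj gW (φ i) (f x) := by
  lift x to gV i using hx
  simp [homogeneousPart, DirectSum.toModule_lof]

end HomogeneousPart

theorem DGVect.exists_homogeneous_contraction (V : DGVect) (hV : Function.Exact V.d V.d) :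
    ∃ h : V.carrier →ₗ[ℚ] V.carrier, (∀ n, ∀ x ∈ V.grading n, h x ∈ V.grading (n + 1)) ∧
      V.d ∘ₗ h + h ∘ₗ V.d = LinearMap.id := by
  obtain ⟨h, hh⟩ := exists_contraction_of_exact hV
  have hpart {n : ℤ} {x : V.carrier} (hx : x ∈ V.grading n) :=
    homogeneousPart_apply V.grading (· + 1) h hx
  refine ⟨homogeneousPart V.grading V.grading (· + 1) h,
    fun n x hx => hpart hx ▸ homogeneousProj_mem _ _ _,
    linearMap_ext_of_homogeneous (gV := V.grading) fun n x hx => ?_⟩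
  calc V.d (homogeneousPart V.grading V.grading (· + 1) h x)
        + homogeneousPart V.grading V.grading (· + 1) h (V.d x)
      = homogeneousProj V.grading n (V.d (h x)) + homogeneousProj V.grading n (h (V.d x)) := by
        rw [hpart hx, hpart (V.d_mem n x hx),
          map_homogeneousProj (sub_left_injective (b := 1)) V.d_mem]
        simp
    _ = homogeneousProj V.grading n x := by
        rw [← map_add]
        exact congrArg _ (LinearMap.congr_fun hh x)
    _ = x := homogeneousProj_of_mem hx

section Parity

variable {V W : Type} [AddCommGroup V] [Module ℚ V] [AddCommGroup W] [Module ℚ W]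
  {gV : ℤ → Submodule ℚ V} {gW : ℤ → Submodule ℚ W}

theorem tensorGrading_le {n : ℤ} {S : Submodule ℚ (V ⊗[ℚ] W)}
    (h : ∀ i j, i + j = n → ∀ v ∈ gV i, ∀ w ∈ gW j, v ⊗ₜ[ℚ] w ∈ S) :
    tensorGrading gV gW n ≤ S := by
  refine iSup_le fun ⟨⟨i, j⟩, hij⟩ => ?_
  rw [TensorProduct.range_map, Submodule.map₂_le]
  rintro _ ⟨v, rfl⟩ _ ⟨w, rfl⟩
  exact h i j hij v v.2 w w.2

theorem tmul_mem_tensorGrading {i j n : ℤ} (hij : i + j = n) {v : V} {w : W} (hv : v ∈ gV i)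
    (hw : w ∈ gW j) : v ⊗ₜ[ℚ] w ∈ tensorGrading gV gW n :=
  Submodule.mem_iSup_of_mem ⟨(i, j), hij⟩ ⟨⟨v, hv⟩ ⊗ₜ ⟨w, hw⟩, rfl⟩

theorem map_mem_tensorGrading {V' W' : Type} [AddCommGroup V'] [Module ℚ V'] [AddCommGroup W']
    [Module ℚ W'] {gV' : ℤ → Submodule ℚ V'} {gW' : ℤ → Submodule ℚ W'}
    {e : V →ₗ[ℚ] V'} {f : W →ₗ[ℚ] W'} {k l : ℤ} (he : ∀ i, ∀ v ∈ gV i, e v ∈ gV' (i + k))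
    (hf : ∀ j, ∀ w ∈ gW j, f w ∈ gW' (j + l)) {n : ℤ} {z : V ⊗[ℚ] W}
    (hz : z ∈ tensorGrading gV gW n) :
    TensorProduct.map e f z ∈ tensorGrading gV' gW' (n + (k + l)) := by
  refine tensorGrading_le (S := (tensorGrading gV' gW' (n + (k + l))).comap _) ?_ hz
  intro i j hij v hv w hw
  exact tmul_mem_tensorGrading (by omega) (he i v hv) (hf j w hw)

variable [DirectSum.Decomposition gV] [DirectSum.Decomposition gW]

theorem parityOf_apply {n : ℤ} {x : V} (hx : x ∈ gV n) : parityOf gV x = (-1 : ℚ) ^ n • x := by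
  lift x to gV n using hx
  simp [parityOf, signOpOf, DirectSum.toModule_lof]

theorem parityOf_mem {n : ℤ} {x : V} (hx : x ∈ gV n) : parityOf gV x ∈ gV n :=
  parityOf_apply hx ▸ (gV n).smul_mem _ hx

theorem parityOf_comp_parityOf : parityOf gV ∘ₗ parityOf gV = LinearMap.id :=
  linearMap_ext_of_homogeneous (gV := gV) fun n x hx => by
    simp [parityOf_apply hx, smul_smul, ← mul_zpow]

theorem parityOf_comp_of_odd {e : V →ₗ[ℚ] W} (he : ∀ n, ∀ x ∈ gV n, e x ∈ gW (n - 1)) :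
    parityOf gW ∘ₗ e = -(e ∘ₗ parityOf gV) :=
  linearMap_ext_of_homogeneous (gV := gV) fun n x hx => by
    simp [parityOf_apply hx, parityOf_apply (he n x hx), zpow_sub_one₀]

theorem map_parityOf_parityOf_comp {U : Type} [AddCommGroup U] [Module ℚ U]
    {gU : ℤ → Submodule ℚ U} [DirectSum.Decomposition gU] {F : U →ₗ[ℚ] V ⊗[ℚ] W}
    (hF : ∀ n, ∀ x ∈ gU n, F x ∈ tensorGrading gV gW n) :
    TensorProduct.map (parityOf gV) (parityOf gW) ∘ₗ F = F ∘ₗ parityOf gU := by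
  refine linearMap_ext_of_homogeneous (gV := gU) fun n x hx => ?_
  have hscalar : tensorGrading gV gW n ≤ LinearMap.eqLocus
      (TensorProduct.map (parityOf gV) (parityOf gW)) ((-1 : ℚ) ^ n • LinearMap.id) := by
    refine tensorGrading_le fun i j hij v hv w hw => ?_
    simp [parityOf_apply hv, parityOf_apply hw, ← hij, zpow_add₀, TensorProduct.smul_tmul',
      smul_smul, mul_comm]
  simpa [parityOf_apply hx] using hscalar (hF n x hx)

end Parity

namespace DGAlgebra

variable (A : DGAlgebra)

theorem d_mul (x y : A.carrier) :
    A.d (A.mul x y) = A.mul (A.d x) y + A.mul (parityOf A.grading x) (A.d y) := by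
  suffices A.mul.compr₂ A.d = A.mul ∘ₗ A.d + A.mul.compl₂ A.d ∘ₗ parityOf A.grading from
    LinearMap.congr_fun₂ this x y
  refine linearMap_ext_of_homogeneous (gV := A.grading) fun n x hx => LinearMap.ext fun y => ?_
  simp [A.leibniz n x y hx, parityOf_apply hx]

theorem parityOf_mul (x y : A.carrier) : parityOf A.grading (A.mul x y)
    = A.mul (parityOf A.grading x) (parityOf A.grading y) := by
  suffices A.mul.compr₂ (parityOf A.grading)
      = A.mul.compl₂ (parityOf A.grading) ∘ₗ parityOf A.grading from
    LinearMap.congr_fun₂ this x y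
  refine linearMap_ext_of_homogeneous (gV := A.grading) fun n x hx =>
    linearMap_ext_of_homogeneous (gV := A.grading) fun m y hy => ?_
  simp [parityOf_apply hx, parityOf_apply hy, parityOf_apply (A.mul_mem _ _ _ _ hx hy), smul_smul,
    zpow_add₀]

variable {N : Type} [AddCommGroup N] [Module ℚ N]

theorem rTensor_parityOf_mul_rTensor_parityOf :
    (parityOf A.grading).rTensor N * (parityOf A.grading).rTensor N = 1 := by
  rw [Module.End.mul_eq_comp, ← LinearMap.rTensor_comp, parityOf_comp_parityOf,
    LinearMap.rTensor_id, Module.End.one_eq_id]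

theorem rTensor_parityOf_mul_rTensor_d_add :
    (parityOf A.grading).rTensor N * A.d.rTensor N
      + A.d.rTensor N * (parityOf A.grading).rTensor N = 0 := by
  rw [Module.End.mul_eq_comp, Module.End.mul_eq_comp, ← LinearMap.rTensor_comp,
    ← LinearMap.rTensor_comp, ← LinearMap.rTensor_add, parityOf_comp_of_odd A.d_mem,
    neg_add_cancel, LinearMap.rTensor_zero]

end DGAlgebra

theorem commute_rTensor_lTensor {R M N : Type*} [CommSemiring R] [AddCommMonoid M] [Module R M]
    [AddCommMonoid N] [Module R N] (f : Module.End R M) (g : Module.End R N) :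
    Commute (f.rTensor N) (g.lTensor M) :=
  (LinearMap.rTensor_comp_lTensor M f g).trans (LinearMap.lTensor_comp_rTensor M f g).symm

section RightFiltration

variable {R M N : Type*} [CommSemiring R] [AddCommMonoid M] [Module R M] [AddCommMonoid N]
  [Module R N]

variable (M) in
/-- The filtration of `M ⊗ N` by the degree of the right factor: the `p`-th stage is spanned by
the tensors `m ⊗ n` with `n` homogeneous of degree at most `p`. -/
def rightFiltration (gN : ℤ → Submodule R N) (p : ℤ) : Submodule R (M ⊗[R] N) :=
  Submodule.map₂ (TensorProduct.mk R M N) ⊤ (⨆ j ≤ p, gN j)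

namespace rightFiltration

variable {gN : ℤ → Submodule R N} {p q : ℤ}

theorem tmul_mem (m : M) {j : ℤ} (hj : j ≤ p) {n : N} (hn : n ∈ gN j) :
    m ⊗ₜ[R] n ∈ rightFiltration M gN p :=
  Submodule.apply_mem_map₂ _ Submodule.mem_top (le_iSup₂ (f := fun j _ => gN j) j hj hn)

theorem le_of_tmul_mem {S : Submodule R (M ⊗[R] N)}
    (h : ∀ m, ∀ j ≤ p, ∀ n ∈ gN j, m ⊗ₜ[R] n ∈ S) : rightFiltration M gN p ≤ S :=
  Submodule.map₂_le.2 fun m _ =>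
    iSup₂_le (a := S.comap (TensorProduct.mk R M N m)) fun j hj n hn => h m j hj n hn

theorem mono (hpq : p ≤ q) : rightFiltration M gN p ≤ rightFiltration M gN q :=
  le_of_tmul_mem fun m _ hj _ hn => tmul_mem m (hj.trans hpq) hn

theorem eq_bot (h : ∀ j ≤ p, gN j = ⊥) : rightFiltration M gN p = ⊥ := by
  rw [rightFiltration, iSup₂_eq_bot.2 h, Submodule.map₂_bot_right]

theorem exists_mem [DirectSum.Decomposition gN] (z : M ⊗[R] N) :
    ∃ p, z ∈ rightFiltration M gN p := by
  have exists_add_mem {x y : M ⊗[R] N} :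
      (∃ p, x ∈ rightFiltration M gN p) → (∃ p, y ∈ rightFiltration M gN p) →
        ∃ p, x + y ∈ rightFiltration M gN p := fun ⟨p, hp⟩ ⟨q, hq⟩ =>
    ⟨max p q, add_mem (mono (le_max_left p q) hp) (mono (le_max_right p q) hq)⟩
  induction z with
  | zero => exact ⟨0, zero_mem _⟩
  | tmul m n =>
    induction n using DirectSum.Decomposition.inductionOn gN with
    | zero => exact ⟨0, by simp⟩
    | @homogeneous j n => exact ⟨j, tmul_mem m le_rfl n.2⟩
    | add _ _ hn hn' => simpa only [TensorProduct.tmul_add] using exists_add_mem hn hn'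
  | add x y hx hy => exact exists_add_mem hx hy

theorem map_mem {M' N' : Type*} [AddCommMonoid M'] [Module R M'] [AddCommMonoid N'] [Module R N']
    {gN' : ℤ → Submodule R N'} (e : M →ₗ[R] M') {f : N →ₗ[R] N'} {k : ℤ}
    (hf : ∀ j, ∀ n ∈ gN j, f n ∈ gN' (j + k)) {z : M ⊗[R] N} (hz : z ∈ rightFiltration M gN p) :
    TensorProduct.map e f z ∈ rightFiltration M' gN' (p + k) :=
  le_of_tmul_mem (S := (rightFiltration M' gN' (p + k)).comap (TensorProduct.map e f))
    (fun m j hj n hn => tmul_mem (e m) (by omega) (hf j n hn)) hz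

end rightFiltration

end RightFiltration

namespace DGComodule

variable {C : DGCoalgebra} (A : DGAlgebra) (N : DGComodule C)

/-- The cap product with a cochain `φ : C → A`, the operator `a ⊗ n ↦ a·φ(n₍₀₎) ⊗ n₍₁₎` on
`A ⊗ N`. The twisting term of `A ⊗_τ N` is the cap product with `τ`, up to the sign `(-1)^{|a|}`. -/
def cap (φ : C.carrier →ₗ[ℚ] A.carrier) : Module.End ℚ (A.carrier ⊗[ℚ] N.carrier) :=
  TensorProduct.map (A.mulMap ∘ₗ TensorProduct.map LinearMap.id φ) LinearMap.id ∘ₗ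
    (TensorProduct.assoc ℚ A.carrier C.carrier N.carrier).symm.toLinearMap ∘ₗ
      TensorProduct.map LinearMap.id N.coact

variable {A N}
variable (φ ψ : C.carrier →ₗ[ℚ] A.carrier)

theorem cap_tmul (a : A.carrier) (n : N.carrier) :
    N.cap A φ (a ⊗ₜ n) = TensorProduct.map (A.mul a ∘ₗ φ) LinearMap.id (N.coact n) := by
  simp only [cap, LinearMap.comp_apply, TensorProduct.map_tmul, LinearMap.id_apply]
  induction N.coact n with
  | zero => simp
  | tmul c m => simp [DGAlgebra.mulMap]
  | add x y hx hy => simp only [TensorProduct.tmul_add, map_add, hx, hy]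

theorem cap_zero : N.cap A 0 = 0 := by
  simp [cap]

theorem cap_add : N.cap A (φ + ψ) = N.cap A φ + N.cap A ψ :=
  TensorProduct.ext' fun a n => by
    simp [cap_tmul, LinearMap.comp_add, TensorProduct.map_add_left]

theorem rTensor_d_mul_cap :
    A.d.rTensor N.carrier * N.cap A φ
      = N.cap A φ * A.d.rTensor N.carrier
        + N.cap A (A.d ∘ₗ φ) * (parityOf A.grading).rTensor N.carrier := by
  refine TensorProduct.ext' fun a n => ?_
  have hleibniz : A.d ∘ₗ A.mul a ∘ₗ φ
      = A.mul (A.d a) ∘ₗ φ + A.mul (parityOf A.grading a) ∘ₗ A.d ∘ₗ φ :=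
    LinearMap.ext fun c => A.d_mul a (φ c)
  simp only [Module.End.mul_apply, LinearMap.add_apply, LinearMap.rTensor, LinearMap.id_apply,
    TensorProduct.map_tmul, cap_tmul, TensorProduct.map_map, hleibniz,
    TensorProduct.map_add_left, LinearMap.comp_id]

theorem rTensor_parityOf_mul_cap :
    (parityOf A.grading).rTensor N.carrier * N.cap A φ
      = N.cap A (parityOf A.grading ∘ₗ φ) * (parityOf A.grading).rTensor N.carrier := by
  refine TensorProduct.ext' fun a n => ?_
  have hmul : parityOf A.grading ∘ₗ A.mul a ∘ₗ φ
      = A.mul (parityOf A.grading a) ∘ₗ parityOf A.grading ∘ₗ φ :=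
    LinearMap.ext fun c => A.parityOf_mul a (φ c)
  simp only [Module.End.mul_apply, LinearMap.rTensor, LinearMap.id_apply, TensorProduct.map_tmul,
    cap_tmul, TensorProduct.map_map, hmul, LinearMap.comp_id]

theorem cap_mul_lTensor_d :
    N.cap A φ * N.d.lTensor A.carrier
      = N.cap A (φ ∘ₗ C.d) + N.d.lTensor A.carrier * N.cap A (φ ∘ₗ parityOf C.grading) := by
  refine TensorProduct.ext' fun a n => ?_
  have hcoact : N.coact (N.d n) = _ := LinearMap.congr_fun N.coact_chain n
  simp only [Module.End.mul_apply, LinearMap.add_apply, LinearMap.lTensor, LinearMap.id_apply,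
    TensorProduct.map_tmul, cap_tmul, hcoact, LinearMap.comp_apply, map_add,
    TensorProduct.map_map, LinearMap.comp_assoc, LinearMap.comp_id, LinearMap.id_comp]

theorem cap_mul_cap :
    N.cap A ψ * N.cap A φ = N.cap A (A.mulMap ∘ₗ TensorProduct.map φ ψ ∘ₗ C.comul) := by
  refine TensorProduct.ext' fun a n => ?_
  have hcap : N.cap A ψ ∘ₗ TensorProduct.map (A.mul a ∘ₗ φ) LinearMap.id
      = TensorProduct.map (A.mulMap ∘ₗ TensorProduct.map (A.mul a ∘ₗ φ) ψ) LinearMap.id ∘ₗ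
        (TensorProduct.assoc ℚ _ _ _).symm.toLinearMap ∘ₗ
          TensorProduct.map LinearMap.id N.coact := by
    refine TensorProduct.ext' fun c m => ?_
    simp only [LinearMap.comp_apply, TensorProduct.map_tmul, cap_tmul, LinearMap.id_apply]
    induction N.coact m with
    | zero => simp
    | tmul c' m' => simp [DGAlgebra.mulMap]
    | add x y hx hy => simp only [TensorProduct.tmul_add, map_add, hx, hy]
  have hcoassoc : (TensorProduct.assoc ℚ _ _ _).symm (TensorProduct.map LinearMap.id N.coact
      (N.coact n)) = TensorProduct.map C.comul LinearMap.id (N.coact n) := by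
    rw [LinearEquiv.symm_apply_eq]
    exact (LinearMap.congr_fun N.coassoc n).symm
  have hmul : A.mulMap ∘ₗ TensorProduct.map (A.mul a ∘ₗ φ) ψ
      = A.mul a ∘ₗ A.mulMap ∘ₗ TensorProduct.map φ ψ :=
    TensorProduct.ext' fun c c' => by simp [DGAlgebra.mulMap, A.mul_assoc']
  calc N.cap A ψ (N.cap A φ (a ⊗ₜ n))
      = TensorProduct.map (A.mulMap ∘ₗ TensorProduct.map (A.mul a ∘ₗ φ) ψ) LinearMap.id
          (TensorProduct.map C.comul LinearMap.id (N.coact n)) := by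
        rw [cap_tmul, ← hcoassoc]
        exact LinearMap.congr_fun hcap (N.coact n)
    _ = N.cap A (A.mulMap ∘ₗ TensorProduct.map φ ψ ∘ₗ C.comul) (a ⊗ₜ n) := by
        simp only [hmul, cap_tmul, TensorProduct.map_map, LinearMap.comp_assoc, LinearMap.comp_id]

variable {φ} in
theorem cap_mem_rightFiltration (hφ : ∀ i ≤ 1, ∀ c ∈ C.grading i, φ c = 0) {p : ℤ}
    {z : A.carrier ⊗[ℚ] N.carrier} (hz : z ∈ rightFiltration A.carrier N.grading p) :
    N.cap A φ z ∈ rightFiltration A.carrier N.grading (p - 2) := by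
  refine rightFiltration.le_of_tmul_mem
    (S := (rightFiltration A.carrier N.grading (p - 2)).comap (N.cap A φ)) ?_ hz
  intro a j hj n hn
  rw [Submodule.mem_comap, cap_tmul]
  refine tensorGrading_le (S := (rightFiltration A.carrier N.grading (p - 2)).comap
    (TensorProduct.map (A.mul a ∘ₗ φ) LinearMap.id)) ?_ (N.coact_mem j n hn)
  intro i k hik c hc m hm
  rw [Submodule.mem_comap, TensorProduct.map_tmul]
  obtain hi | hi := le_or_gt i 1
  · simp [hφ i hi c hc]
  · exact rightFiltration.tmul_mem _ (by omega) hm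

section TwistedExtension

variable (τ : TwistingChain C A)

theorem extDiff_comp_lTensor_of_intertwines {M : Type} [AddCommGroup M] [Module ℚ M]
    (dM : M →ₗ[ℚ] M) {ρ : M →ₗ[ℚ] C.carrier ⊗[ℚ] M} {σ : C.carrier →ₗ[ℚ] C.carrier}
    {i : N.carrier →ₗ[ℚ] M} (hi : ρ ∘ₗ i = TensorProduct.map σ i ∘ₗ N.coact) :
    extDiff C A τ M dM ρ ∘ₗ i.lTensor A.carrier
      = i.lTensor A.carrier ∘ₗ A.d.rTensor N.carrier
        + (dM ∘ₗ i).lTensor A.carrier ∘ₗ (parityOf A.grading).rTensor N.carrier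
        - i.lTensor A.carrier ∘ₗ
          N.cap A (τ.toFun ∘ₗ σ) ∘ₗ (parityOf A.grading).rTensor N.carrier := by
  refine TensorProduct.ext' fun a n => ?_
  have hρ : ρ (i n) = TensorProduct.map σ i (N.coact n) := LinearMap.congr_fun hi n
  simp only [extDiff, LinearMap.comp_apply, LinearMap.add_apply, LinearMap.sub_apply,
    TensorProduct.map_tmul, LinearMap.rTensor_tmul, LinearMap.lTensor_tmul, cap_tmul,
    LinearMap.id_apply, LinearEquiv.coe_coe, hρ]
  congr 1
  induction N.coact n with
  | zero => simp
  | tmul c m => simp [DGAlgebra.mulMap]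
  | add x y hx hy => simp only [TensorProduct.tmul_add, map_add, hx, hy]

theorem extDiff_eq :
    extDiff C A τ N.carrier N.d N.coact
      = A.d.rTensor N.carrier + (parityOf A.grading).rTensor N.carrier * N.d.lTensor A.carrier
        - N.cap A τ.toFun * (parityOf A.grading).rTensor N.carrier := by
  rw [commute_rTensor_lTensor]
  simpa [Module.End.mul_eq_comp] using extDiff_comp_lTensor_of_intertwines τ N.d
    (i := LinearMap.id) (σ := LinearMap.id) (ρ := N.coact) (by simp)

theorem rTensor_parityOf_mul_cap_twistingChain_add :
    (parityOf A.grading).rTensor N.carrier * N.cap A τ.toFun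
      + N.cap A (τ.toFun ∘ₗ parityOf C.grading) * (parityOf A.grading).rTensor N.carrier = 0 := by
  rw [rTensor_parityOf_mul_cap, ← add_mul, ← cap_add, parityOf_comp_of_odd τ.mem, neg_add_cancel,
    cap_zero, zero_mul]

theorem extDiff_mul_extDiff :
    (extDiff C A τ N.carrier N.d N.coact * extDiff C A τ N.carrier N.d N.coact :
      Module.End ℚ (A.carrier ⊗[ℚ] N.carrier)) = 0 := by
  rw [extDiff_eq]
  set δ := A.d.rTensor N.carrier with hδ
  set P := (parityOf A.grading).rTensor N.carrier
  set D := N.d.lTensor A.carrier with hD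
  set T := N.cap A τ.toFun
  set T₁ := N.cap A (A.d ∘ₗ τ.toFun)
  set T₂ := N.cap A (τ.toFun ∘ₗ C.d)
  set T₃ := N.cap A (τ.toFun ∘ₗ parityOf C.grading)
  have hδδ : δ * δ = 0 := by
    rw [hδ, Module.End.mul_eq_comp, ← LinearMap.rTensor_comp, A.d_sq, LinearMap.rTensor_zero]
  have hDD : D * D = 0 := by
    rw [hD, Module.End.mul_eq_comp, ← LinearMap.lTensor_comp, N.d_sq, LinearMap.lTensor_zero]
  have hPP : P * P = 1 := A.rTensor_parityOf_mul_rTensor_parityOf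
  have hPδ : P * δ + δ * P = 0 := A.rTensor_parityOf_mul_rTensor_d_add
  have hPD : P * D = D * P := commute_rTensor_lTensor _ _
  have hδD : δ * D = D * δ := commute_rTensor_lTensor _ _
  have hδT : δ * T = T * δ + T₁ * P := rTensor_d_mul_cap _
  have hTD : T * D = T₂ + D * T₃ := cap_mul_lTensor_d _
  have hPT : P * T + T₃ * P = 0 := rTensor_parityOf_mul_cap_twistingChain_add τ
  have htwist : T₁ + T₂ + T * T₃ = 0 := by
    rw [cap_mul_cap, ← cap_add, ← cap_add, τ.twist, cap_zero]
  have huntwisted : (δ + P * D) * (δ + P * D) = 0 := by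
    linear_combination (norm := noncomm_ring) hδδ - P * hδD + hPδ * D - P * hPD * D + P * P * hDD
  have hcross : (δ + P * D) * (T * P) + T * P * (δ + P * D) = T₁ + T₂ := by
    linear_combination (norm := noncomm_ring) hδT * P + T * hPδ + T₁ * hPP
      + hPD * T * P + D * hPT * P - D * T₃ * hPP + T * hPP * D + hTD
  have hsquare : T * P * (T * P) = -(T * T₃) := by
    linear_combination (norm := noncomm_ring) T * hPT * P - T * T₃ * hPP
  rw [mul_sub, sub_mul, sub_mul, huntwisted, hsquare]
  linear_combination (norm := abel) -hcross - htwist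

theorem rTensor_parityOf_mul_extDiff_mul_rTensor_parityOf :
    ((parityOf A.grading).rTensor N.carrier * extDiff C A τ N.carrier N.d N.coact *
        (parityOf A.grading).rTensor N.carrier : Module.End ℚ (A.carrier ⊗[ℚ] N.carrier))
      = N.d.lTensor A.carrier * (parityOf A.grading).rTensor N.carrier
        - A.d.rTensor N.carrier
        + N.cap A (τ.toFun ∘ₗ parityOf C.grading) * (parityOf A.grading).rTensor N.carrier := by
  rw [extDiff_eq]
  set δ := A.d.rTensor N.carrier
  set P := (parityOf A.grading).rTensor N.carrier
  set D := N.d.lTensor A.carrier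
  set T := N.cap A τ.toFun
  set T₃ := N.cap A (τ.toFun ∘ₗ parityOf C.grading)
  have hPP : P * P = 1 := A.rTensor_parityOf_mul_rTensor_parityOf
  have hPδ : P * δ + δ * P = 0 := A.rTensor_parityOf_mul_rTensor_d_add
  have hPT : P * T + T₃ * P = 0 := rTensor_parityOf_mul_cap_twistingChain_add τ
  rw [mul_sub, sub_mul]
  linear_combination (norm := noncomm_ring) hPδ * P - δ * hPP + hPP * D * P - hPT * P * P
    + T₃ * P * hPP

theorem one_sub_extDiff_homotopy {h : Module.End ℚ N.carrier} (hh : N.d * h + h * N.d = 1) :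
    letI P := (parityOf A.grading).rTensor N.carrier
    letI D := extDiff C A τ N.carrier N.d N.coact
    letI H := P * h.lTensor A.carrier
    1 - (D * H + H * D)
      = N.cap A τ.toFun * h.lTensor A.carrier + H * N.cap A τ.toFun * P := by
  rw [extDiff_eq]
  set δ := A.d.rTensor N.carrier
  set P := (parityOf A.grading).rTensor N.carrier
  set D := N.d.lTensor A.carrier with hD
  set η := h.lTensor A.carrier with hη
  set T := N.cap A τ.toFun
  have hPP : P * P = 1 := A.rTensor_parityOf_mul_rTensor_parityOf
  have hPδ : P * δ + δ * P = 0 := A.rTensor_parityOf_mul_rTensor_d_add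
  have hPD : P * D = D * P := commute_rTensor_lTensor _ _
  have hPη : P * η = η * P := commute_rTensor_lTensor _ _
  have hδη : δ * η = η * δ := commute_rTensor_lTensor _ _
  have hDη : D * η + η * D = 1 := by
    rw [hD, hη, ← LinearMap.lTensor_mul, ← LinearMap.lTensor_mul, ← LinearMap.lTensor_add, hh,
      Module.End.one_eq_id, LinearMap.lTensor_id, Module.End.one_eq_id]
  have huntwisted : (δ + P * D) * (P * η) + P * η * (δ + P * D) = 1 := by
    linear_combination (norm := noncomm_ring) hPδ * η - P * hδη - P * hPD * η - P * hPη * D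
      + hPP * D * η + hPP * η * D + hDη
  have htwist : T * P * (P * η) = T * η := by
    rw [mul_assoc, ← mul_assoc P, hPP, one_mul]
  rw [sub_mul, mul_sub, htwist, ← mul_assoc (P * η) T P]
  linear_combination (norm := abel) -huntwisted

variable {τ} in
theorem exact_extDiff (hτ : ∀ i ≤ 1, ∀ c ∈ C.grading i, τ.toFun c = 0)
    (hbdd : N.toDGVect.BoundedBelow) (hexact : Function.Exact N.d N.d) :
    Function.Exact (extDiff C A τ N.carrier N.d N.coact)
      (extDiff C A τ N.carrier N.d N.coact) := by
  obtain ⟨b, hb⟩ := hbdd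
  obtain ⟨h, h_mem, hh⟩ := N.exists_homogeneous_contraction hexact
  let P := (parityOf A.grading).rTensor N.carrier
  let η := h.lTensor A.carrier
  let F := rightFiltration A.carrier N.grading
  have hF : ∀ q < b, F q = ⊥ := fun q hq => rightFiltration.eq_bot fun j hj => hb j (by omega)
  have hP {q : ℤ} {z} (hz : z ∈ F q) : P z ∈ F q := by
    simpa [F, P, LinearMap.rTensor] using
      rightFiltration.map_mem (k := 0) (parityOf A.grading) (f := LinearMap.id) (by simp) hz
  have hη {q : ℤ} {z} (hz : z ∈ F q) : η z ∈ F (q + 1) :=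
    rightFiltration.map_mem LinearMap.id h_mem hz
  refine exact_of_homotopy_pow_apply_eq_zero (h := P * η) (extDiff_mul_extDiff τ) fun x => ?_
  obtain ⟨p, hp⟩ := rightFiltration.exists_mem (gN := N.grading) x
  refine exists_pow_apply_eq_zero_of_lowers_filtration hF (fun q z hz => ?_) hp
  rw [one_sub_extDiff_homotopy τ hh]
  refine add_mem (rightFiltration.mono ?_ (cap_mem_rightFiltration hτ (hη hz)))
    (rightFiltration.mono ?_ (hP (hη (cap_mem_rightFiltration hτ (hP hz))))) <;> omega

end TwistedExtension

end DGComodule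

section MappingCone

variable {R V W : Type*} [Ring R] [AddCommGroup V] [Module R V] [AddCommGroup W] [Module R W]

/-- The differential `(v, w) ↦ (-dv, fv + dw)` of the mapping cone of a chain map `f`. -/
def coneDiff (dV : Module.End R V) (dW : Module.End R W) (f : V →ₗ[R] W) : Module.End R (V × W) :=
  (-(dV ∘ₗ LinearMap.fst R V W)).prod (f.coprod dW)

@[simp]
theorem coneDiff_apply (dV : Module.End R V) (dW : Module.End R W) (f : V →ₗ[R] W) (x : V × W) :
    coneDiff dV dW f x = (-dV x.1, f x.1 + dW x.2) :=
  rfl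

theorem coneDiff_comp_inl (dV : Module.End R V) (dW : Module.End R W) (f : V →ₗ[R] W) :
    coneDiff dV dW f ∘ₗ LinearMap.inl R V W
      = LinearMap.inr R V W ∘ₗ f - LinearMap.inl R V W ∘ₗ dV :=
  LinearMap.ext fun v => by simp

theorem coneDiff_comp_inr (dV : Module.End R V) (dW : Module.End R W) (f : V →ₗ[R] W) :
    coneDiff dV dW f ∘ₗ LinearMap.inr R V W = LinearMap.inr R V W ∘ₗ dW :=
  LinearMap.ext fun w => by simp

theorem coneDiff_comp_coneDiff {dV : Module.End R V} {dW : Module.End R W} {f : V →ₗ[R] W}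
    (hV : dV ∘ₗ dV = 0) (hW : dW ∘ₗ dW = 0) (hf : f ∘ₗ dV = dW ∘ₗ f) :
    coneDiff dV dW f ∘ₗ coneDiff dV dW f = 0 := by
  refine LinearMap.ext fun x => Prod.ext ?_ ?_
  · simpa using LinearMap.congr_fun hV x.1
  · have hfx : f (dV x.1) = dW (f x.1) := LinearMap.congr_fun hf x.1
    simpa [hfx] using LinearMap.congr_fun hW x.2

end MappingCone

section QuasiIso

variable {V W : Type} [AddCommGroup V] [Module ℚ V] [AddCommGroup W] [Module ℚ W]
  {dV : V →ₗ[ℚ] V} {dW : W →ₗ[ℚ] W} {f : V →ₗ[ℚ] W}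

theorem IsQuasiIso.exact_coneDiff (hq : IsQuasiIso dV dW f) (hV : dV ∘ₗ dV = 0)
    (hW : dW ∘ₗ dW = 0) (hf : f ∘ₗ dV = dW ∘ₗ f) :
    Function.Exact (coneDiff dV dW f) (coneDiff dV dW f) := by
  refine fun ⟨v, w⟩ => ⟨fun h => ?_, ?_⟩
  · obtain ⟨hv, hw⟩ : dV v = 0 ∧ f v + dW w = 0 := by simpa using h
    obtain ⟨z, rfl⟩ := hq.1 v hv ⟨-w, by rw [map_neg]; exact eq_neg_of_add_eq_zero_left hw⟩
    have hfz : f (dV z) = dW (f z) := LinearMap.congr_fun hf z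
    obtain ⟨c, hc, y, hy⟩ := hq.2 (w + f z) (by rw [map_add, ← hfz, add_comm, hw])
    refine ⟨(c - z, y), Prod.ext (by simp [hc]) ?_⟩
    simp [← hy]
  · rintro ⟨x, hx⟩
    rw [← hx]
    exact LinearMap.congr_fun (coneDiff_comp_coneDiff hV hW hf) x

theorem IsQuasiIso.of_exact_coneDiff
    (h : Function.Exact (coneDiff dV dW f) (coneDiff dV dW f)) : IsQuasiIso dV dW f := by
  refine ⟨fun x hx ⟨y, hxy⟩ => ?_, fun w hw => ?_⟩
  · obtain ⟨a, ha⟩ := (h (x, -y)).1 (by simp [hx, hxy])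
    exact ⟨-a.1, by simpa using (congrArg Prod.fst ha).symm⟩
  · obtain ⟨a, ha⟩ := (h (0, w)).1 (by simp [hw])
    refine ⟨a.1, by simpa using congrArg Prod.fst ha, a.2, ?_⟩
    simpa [sub_eq_iff_eq_add'] using (congrArg Prod.snd ha).symm

end QuasiIso

section GradedProduct

variable {R ι V W : Type*} [Ring R] [AddCommGroup V] [Module R V]
  [AddCommGroup W] [Module R W] {gV : ι → Submodule R V} {gW : ι → Submodule R W}

theorem iSupIndep_prod (hV : iSupIndep gV) (hW : iSupIndep gW) :
    iSupIndep fun i => (gV i).prod (gW i) := fun i => by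
  have hle : ⨆ j ≠ i, (gV j).prod (gW j) ≤ (⨆ j ≠ i, gV j).prod (⨆ j ≠ i, gW j) :=
    iSup₂_le fun j hj => Submodule.prod_mono (le_iSup₂_of_le j hj le_rfl)
      (le_iSup₂_of_le j hj le_rfl)
  refine Disjoint.mono_right hle ?_
  rw [disjoint_iff, Submodule.prod_inf_prod, (hV i).eq_bot, (hW i).eq_bot, Submodule.prod_bot]

theorem iSup_prod_eq_top (hV : iSup gV = ⊤) (hW : iSup gW = ⊤) :
    ⨆ i, (gV i).prod (gW i) = ⊤ := by
  rw [eq_top_iff, ← Submodule.prod_top, ← hV, ← hW, LinearMap.prod_eq_sup_map, Submodule.map_iSup,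
    Submodule.map_iSup]
  simp only [LinearMap.prod_eq_sup_map]
  exact sup_le (iSup_mono fun i => le_sup_left) (iSup_mono fun i => le_sup_right)

theorem isInternal_prod [DecidableEq ι] (hV : DirectSum.IsInternal gV)
    (hW : DirectSum.IsInternal gW) : DirectSum.IsInternal fun i => (gV i).prod (gW i) := by
  rw [DirectSum.isInternal_submodule_iff_iSupIndep_and_iSup_eq_top] at *
  exact ⟨iSupIndep_prod hV.1 hW.1, iSup_prod_eq_top hV.2 hW.2⟩

theorem isInternal_comp_equiv {κ : Type*} [DecidableEq ι] [DecidableEq κ]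
    (hV : DirectSum.IsInternal gV) (e : κ ≃ ι) : DirectSum.IsInternal (gV ∘ e) := by
  rw [DirectSum.isInternal_submodule_iff_iSupIndep_and_iSup_eq_top] at *
  exact ⟨hV.1.comp e.injective, e.iSup_comp.trans hV.2⟩

end GradedProduct

/-- The mapping cone of a degree `0` chain map `f : V → W`, with `V` shifted up by one degree. -/
def DGVect.cone (V W : DGVect) (f : V.carrier →ₗ[ℚ] W.carrier)
    (hf_mem : ∀ n, ∀ x ∈ V.grading n, f x ∈ W.grading n) (hf : f ∘ₗ V.d = W.d ∘ₗ f) : DGVect :=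
  let grading : ℤ → Submodule ℚ (V.carrier × W.carrier) :=
    fun n => (V.grading (n - 1)).prod (W.grading n)
  have hinternal : DirectSum.IsInternal grading :=
    isInternal_prod (isInternal_comp_equiv (DirectSum.Decomposition.isInternal V.grading)
      (Equiv.subRight 1)) (DirectSum.Decomposition.isInternal W.grading)
  letI := hinternal.chooseDecomposition
  { carrier := V.carrier × W.carrier
    grading := grading
    d := coneDiff V.d W.d f
    d_mem := fun _ _ hx =>
      ⟨neg_mem (V.d_mem _ _ hx.1), add_mem (hf_mem _ _ hx.1) (W.d_mem _ _ hx.2)⟩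
    d_sq := coneDiff_comp_coneDiff V.d_sq W.d_sq hf }

theorem DGVect.cone_boundedBelow {V W : DGVect} {f : V.carrier →ₗ[ℚ] W.carrier}
    (hf_mem : ∀ n, ∀ x ∈ V.grading n, f x ∈ W.grading n) (hf : f ∘ₗ V.d = W.d ∘ₗ f)
    (hV : V.BoundedBelow) (hW : W.BoundedBelow) : (V.cone W f hf_mem hf).BoundedBelow := by
  obtain ⟨b, hb⟩ := hV
  obtain ⟨c, hc⟩ := hW
  refine ⟨min b c, fun n hn => ?_⟩
  change (V.grading (n - 1)).prod (W.grading n) = ⊥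
  rw [hb _ (by omega), hc _ (by omega), Submodule.prod_bot]

theorem DGCoalgebra.counit_comp_parityOf (C : DGCoalgebra) :
    C.counit ∘ₗ parityOf C.grading = C.counit :=
  linearMap_ext_of_homogeneous (gV := C.grading) fun n c hc => by
    obtain rfl | hn := eq_or_ne n 0
    · simp [parityOf_apply hc]
    · simp [parityOf_apply hc, C.counit_zero n hn c hc]

section TensorProductMap

variable {R M N P Q : Type*} [CommRing R] [AddCommGroup M] [Module R M] [AddCommGroup N]
  [Module R N] [AddCommGroup P] [Module R P] [AddCommGroup Q] [Module R Q]

theorem tensorProductMap_neg_left (f : M →ₗ[R] P) (g : N →ₗ[R] Q) :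
    TensorProduct.map (-f) g = -TensorProduct.map f g :=
  LinearMap.map_neg₂ (TensorProduct.mapBilinear (.id R) M N P Q) f g

theorem tensorProductMap_sub_right (f : M →ₗ[R] P) (g₁ g₂ : N →ₗ[R] Q) :
    TensorProduct.map f (g₁ - g₂) = TensorProduct.map f g₁ - TensorProduct.map f g₂ :=
  map_sub (TensorProduct.mapBilinear (.id R) M N P Q f) g₁ g₂

end TensorProductMap

namespace DGComodule

variable {C : DGCoalgebra} (N : DGComodule C) {M : Type} [AddCommGroup M] [Module ℚ M]
  {σ : C.carrier →ₗ[ℚ] C.carrier} {i : N.carrier →ₗ[ℚ] M} {ρ : M →ₗ[ℚ] C.carrier ⊗[ℚ] M}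

theorem coassoc_of_intertwines (hσ : TensorProduct.map σ σ ∘ₗ C.comul = C.comul ∘ₗ σ)
    (hi : ρ ∘ₗ i = TensorProduct.map σ i ∘ₗ N.coact) :
    ((TensorProduct.assoc ℚ C.carrier C.carrier M).toLinearMap ∘ₗ
        TensorProduct.map C.comul LinearMap.id ∘ₗ ρ) ∘ₗ i
      = (TensorProduct.map LinearMap.id ρ ∘ₗ ρ) ∘ₗ i := by
  refine LinearMap.ext fun v => ?_
  have hi' : ∀ n, ρ (i n) = TensorProduct.map σ i (N.coact n) := LinearMap.congr_fun hi
  have hcoassoc := LinearMap.congr_fun N.coassoc v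
  simp only [LinearMap.comp_apply, LinearEquiv.coe_coe] at hcoassoc ⊢
  calc TensorProduct.assoc ℚ C.carrier C.carrier M
        (TensorProduct.map C.comul LinearMap.id (ρ (i v)))
      = TensorProduct.assoc ℚ C.carrier C.carrier M (TensorProduct.map (TensorProduct.map σ σ) i
          (TensorProduct.map C.comul LinearMap.id (N.coact v))) := by
        simp only [hi', TensorProduct.map_map, hσ, LinearMap.id_comp, LinearMap.comp_id]
    _ = TensorProduct.map σ (TensorProduct.map σ i)
          (TensorProduct.map LinearMap.id N.coact (N.coact v)) := by
        rw [← hcoassoc, TensorProduct.map_map_assoc]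
    _ = TensorProduct.map LinearMap.id ρ (ρ (i v)) := by
        simp only [hi', TensorProduct.map_map, hi, LinearMap.id_comp, LinearMap.comp_id]

theorem counit_of_intertwines (hσ : C.counit ∘ₗ σ = C.counit)
    (hi : ρ ∘ₗ i = TensorProduct.map σ i ∘ₗ N.coact) :
    ((TensorProduct.lid ℚ M).toLinearMap ∘ₗ TensorProduct.map C.counit LinearMap.id ∘ₗ ρ) ∘ₗ i
      = i := by
  refine LinearMap.ext fun v => ?_
  have hi' : ρ (i v) = TensorProduct.map σ i (N.coact v) := LinearMap.congr_fun hi v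
  have hlid (z : ℚ ⊗[ℚ] N.carrier) : TensorProduct.lid ℚ M (TensorProduct.map LinearMap.id i z)
      = i (TensorProduct.lid ℚ N.carrier z) := by
    induction z with
    | zero => simp
    | tmul q n => simp
    | add x y hx hy => simp only [map_add, hx, hy]
  have hcounit : TensorProduct.lid ℚ N.carrier _ = v := LinearMap.congr_fun N.counit_coact v
  calc TensorProduct.lid ℚ M (TensorProduct.map C.counit LinearMap.id (ρ (i v)))
      = TensorProduct.lid ℚ M (TensorProduct.map LinearMap.id i
          (TensorProduct.map C.counit LinearMap.id (N.coact v))) := by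
        simp only [hi', TensorProduct.map_map, hσ, LinearMap.id_comp, LinearMap.comp_id]
    _ = i v := (hlid _).trans (congrArg i hcounit)

end DGComodule

section ComoduleCone

variable {C : DGCoalgebra} {N N' : DGComodule C}

variable (N N') in
/-- The coaction of the mapping cone of a comodule morphism `N → N'`. The Koszul sign of the shift
of `N` appears as the parity operator on the `C`-factor. -/
def coneCoact : N.carrier × N'.carrier →ₗ[ℚ] C.carrier ⊗[ℚ] (N.carrier × N'.carrier) :=
  (TensorProduct.map (parityOf C.grading) (LinearMap.inl ℚ N.carrier N'.carrier) ∘ₗ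
      N.coact).coprod
    (TensorProduct.map LinearMap.id (LinearMap.inr ℚ N.carrier N'.carrier) ∘ₗ N'.coact)

theorem coneCoact_comp_inl : coneCoact N N' ∘ₗ LinearMap.inl ℚ _ _
    = TensorProduct.map (parityOf C.grading) (LinearMap.inl ℚ _ _) ∘ₗ N.coact :=
  LinearMap.coprod_inl _ _

theorem coneCoact_comp_inr : coneCoact N N' ∘ₗ LinearMap.inr ℚ _ _
    = TensorProduct.map LinearMap.id (LinearMap.inr ℚ _ _) ∘ₗ N'.coact :=
  LinearMap.coprod_inr _ _

variable (N N') in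
theorem coneCoact_mem (n : ℤ) :
    ∀ x ∈ (N.grading (n - 1)).prod (N'.grading n), coneCoact N N' x
      ∈ tensorGrading C.grading (fun n => (N.grading (n - 1)).prod (N'.grading n)) n := by
  let gCone : ℤ → Submodule ℚ (N.carrier × N'.carrier) :=
    fun n => (N.grading (n - 1)).prod (N'.grading n)
  have hP : ∀ i, ∀ c ∈ C.grading i, parityOf C.grading c ∈ C.grading (i + 0) := fun i c hc => by
    simpa using parityOf_mem hc
  have hinl : ∀ i, ∀ v ∈ N.grading i, LinearMap.inl ℚ N.carrier N'.carrier v ∈ gCone (i + 1) :=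
    fun i v hv => by simpa [gCone] using hv
  have hinr : ∀ i, ∀ w ∈ N'.grading i, LinearMap.inr ℚ N.carrier N'.carrier w ∈ gCone (i + 0) :=
    fun i w hw => by simpa [gCone] using hw
  refine fun x ⟨hv, hw⟩ => add_mem ?_ ?_
  · simpa using map_mem_tensorGrading hP hinl (N.coact_mem _ _ hv)
  · simpa using map_mem_tensorGrading (k := 0) (e := LinearMap.id) (by simp) hinr
      (N'.coact_mem _ _ hw)

theorem coneCoact_coassoc :
    (TensorProduct.assoc ℚ C.carrier C.carrier _).toLinearMap ∘ₗ
        TensorProduct.map C.comul LinearMap.id ∘ₗ coneCoact N N'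
      = TensorProduct.map LinearMap.id (coneCoact N N') ∘ₗ coneCoact N N' :=
  LinearMap.prod_ext
    (N.coassoc_of_intertwines (map_parityOf_parityOf_comp C.comul_mem) coneCoact_comp_inl)
    (N'.coassoc_of_intertwines (by simp) coneCoact_comp_inr)

theorem counit_coneCoact :
    (TensorProduct.lid ℚ _).toLinearMap ∘ₗ
        TensorProduct.map C.counit LinearMap.id ∘ₗ coneCoact N N' = LinearMap.id :=
  LinearMap.prod_ext (N.counit_of_intertwines C.counit_comp_parityOf coneCoact_comp_inl)
    (N'.counit_of_intertwines (LinearMap.comp_id _) coneCoact_comp_inr)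

theorem coneCoact_comp_coneDiff_comp_inl {g : N.carrier →ₗ[ℚ] N'.carrier}
    (hg : TensorProduct.map LinearMap.id g ∘ₗ N.coact = N'.coact ∘ₗ g) :
    (coneCoact N N' ∘ₗ coneDiff N.d N'.d g) ∘ₗ LinearMap.inl ℚ _ _
      = ((TensorProduct.map C.d LinearMap.id
          + TensorProduct.map (parityOf C.grading) (coneDiff N.d N'.d g)) ∘ₗ coneCoact N N') ∘ₗ
        LinearMap.inl ℚ _ _ := by
  have hPP : parityOf C.grading ∘ₗ parityOf C.grading = LinearMap.id := parityOf_comp_parityOf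
  have hPd : parityOf C.grading ∘ₗ C.d = -(C.d ∘ₗ parityOf C.grading) :=
    parityOf_comp_of_odd C.d_mem
  calc (coneCoact N N' ∘ₗ coneDiff N.d N'.d g) ∘ₗ LinearMap.inl ℚ _ _
      = (coneCoact N N' ∘ₗ LinearMap.inr ℚ _ _) ∘ₗ g
          - (coneCoact N N' ∘ₗ LinearMap.inl ℚ _ _) ∘ₗ N.d := by
        rw [LinearMap.comp_assoc, coneDiff_comp_inl, LinearMap.comp_sub, LinearMap.comp_assoc,
          LinearMap.comp_assoc]
    _ = (TensorProduct.map LinearMap.id (LinearMap.inr ℚ _ _) ∘ₗ TensorProduct.map LinearMap.id g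
          - TensorProduct.map (parityOf C.grading) (LinearMap.inl ℚ _ _) ∘ₗ
            (TensorProduct.map C.d LinearMap.id + TensorProduct.map (parityOf C.grading) N.d)) ∘ₗ
              N.coact := by
        rw [coneCoact_comp_inr, coneCoact_comp_inl, LinearMap.comp_assoc, LinearMap.comp_assoc,
          N.coact_chain, ← hg, LinearMap.sub_comp, LinearMap.comp_assoc, LinearMap.comp_assoc]
    _ = ((TensorProduct.map C.d LinearMap.id
          + TensorProduct.map (parityOf C.grading) (coneDiff N.d N'.d g)) ∘ₗ
            TensorProduct.map (parityOf C.grading) (LinearMap.inl ℚ _ _)) ∘ₗ N.coact := by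
        congr 1
        simp only [LinearMap.comp_add, LinearMap.add_comp, ← TensorProduct.map_comp, hPP, hPd,
          LinearMap.id_comp, LinearMap.comp_id, coneDiff_comp_inl, tensorProductMap_neg_left,
          tensorProductMap_sub_right]
        abel
    _ = _ := by
        rw [LinearMap.comp_assoc, LinearMap.comp_assoc, coneCoact_comp_inl]

theorem coneCoact_comp_coneDiff_comp_inr (g : N.carrier →ₗ[ℚ] N'.carrier) :
    (coneCoact N N' ∘ₗ coneDiff N.d N'.d g) ∘ₗ LinearMap.inr ℚ _ _
      = ((TensorProduct.map C.d LinearMap.id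
          + TensorProduct.map (parityOf C.grading) (coneDiff N.d N'.d g)) ∘ₗ coneCoact N N') ∘ₗ
        LinearMap.inr ℚ _ _ := by
  rw [LinearMap.comp_assoc, coneDiff_comp_inr, ← LinearMap.comp_assoc,
    LinearMap.comp_assoc (LinearMap.inr ℚ _ _), coneCoact_comp_inr, LinearMap.comp_assoc,
    N'.coact_chain]
  simp only [LinearMap.comp_add, LinearMap.add_comp, ← LinearMap.comp_assoc,
    ← TensorProduct.map_comp, LinearMap.id_comp, LinearMap.comp_id, coneDiff_comp_inr]

theorem coneCoact_comp_coneDiff {g : N.carrier →ₗ[ℚ] N'.carrier}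
    (hg : TensorProduct.map LinearMap.id g ∘ₗ N.coact = N'.coact ∘ₗ g) :
    coneCoact N N' ∘ₗ coneDiff N.d N'.d g
      = (TensorProduct.map C.d LinearMap.id
          + TensorProduct.map (parityOf C.grading) (coneDiff N.d N'.d g)) ∘ₗ coneCoact N N' :=
  LinearMap.prod_ext (coneCoact_comp_coneDiff_comp_inl hg) (coneCoact_comp_coneDiff_comp_inr g)

end ComoduleCone

/-- The mapping cone of a morphism of dg comodules. -/
def DGComodule.cone {C : DGCoalgebra} (N N' : DGComodule C) (g : N.carrier →ₗ[ℚ] N'.carrier)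
    (hg : IsComoduleHom C N N' g) : DGComodule C where
  toDGVect := N.toDGVect.cone N'.toDGVect g hg.1 hg.2.1
  coact := coneCoact N N'
  coact_mem := coneCoact_mem N N'
  coassoc := coneCoact_coassoc
  counit_coact := counit_coneCoact
  coact_chain := coneCoact_comp_coneDiff hg.2.2

theorem tensorProduct_prod_ext {R A M N P : Type*} [CommSemiring R] [AddCommMonoid A] [Module R A]
    [AddCommMonoid M] [Module R M] [AddCommMonoid N] [Module R N] [AddCommMonoid P] [Module R P]
    {f g : A ⊗[R] (M × N) →ₗ[R] P}
    (hinl : f ∘ₗ (LinearMap.inl R M N).lTensor A = g ∘ₗ (LinearMap.inl R M N).lTensor A)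
    (hinr : f ∘ₗ (LinearMap.inr R M N).lTensor A = g ∘ₗ (LinearMap.inr R M N).lTensor A) :
    f = g :=
  TensorProduct.ext (LinearMap.ext fun a => LinearMap.prod_ext
    (LinearMap.ext fun m => LinearMap.congr_fun hinl (a ⊗ₜ m))
    (LinearMap.ext fun n => LinearMap.congr_fun hinr (a ⊗ₜ n)))

section ConeTwistedExtension

variable {C : DGCoalgebra} {A : DGAlgebra} {N N' : DGComodule C}

variable (A N N') in
/-- The identification of `A ⊗_τ cone(g)` with the cone of `A ⊗_τ N → A ⊗_τ N'`. Moving the shift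
of `N` past `A` costs the Koszul sign `(-1)^{|a|}`. -/
def tensorConeEquiv : A.carrier ⊗[ℚ] (N.carrier × N'.carrier)
    ≃ₗ[ℚ] (A.carrier ⊗[ℚ] N.carrier) × (A.carrier ⊗[ℚ] N'.carrier) :=
  TensorProduct.prodRight ℚ ℚ A.carrier N.carrier N'.carrier ≪≫ₗ
    (LinearEquiv.ofInvolutive ((parityOf A.grading).rTensor N.carrier)
      (LinearMap.congr_fun A.rTensor_parityOf_mul_rTensor_parityOf)).prodCongr
      (LinearEquiv.refl ℚ _)

theorem tensorConeEquiv_comp_lTensor_inl :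
    (tensorConeEquiv A N N').toLinearMap ∘ₗ (LinearMap.inl ℚ _ _).lTensor A.carrier
      = LinearMap.inl ℚ _ _ ∘ₗ (parityOf A.grading).rTensor N.carrier :=
  TensorProduct.ext' fun a v => by
    change ((parityOf A.grading).rTensor N.carrier (a ⊗ₜ v), a ⊗ₜ (0 : N'.carrier)) = _
    simp

theorem tensorConeEquiv_comp_lTensor_inr :
    (tensorConeEquiv A N N').toLinearMap ∘ₗ (LinearMap.inr ℚ _ _).lTensor A.carrier
      = LinearMap.inr ℚ _ _ :=
  TensorProduct.ext' fun a v => by simp [tensorConeEquiv]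

variable (N N') (τ : TwistingChain C A) (g : N.carrier →ₗ[ℚ] N'.carrier)

theorem extDiff_cone_comp_lTensor_inl :
    extDiff C A τ _ (coneDiff N.d N'.d g) (coneCoact N N') ∘ₗ
        (LinearMap.inl ℚ N.carrier N'.carrier).lTensor A.carrier
      = ((LinearMap.inr ℚ _ _).lTensor A.carrier ∘ₗ g.lTensor A.carrier
          - (LinearMap.inl ℚ _ _).lTensor A.carrier ∘ₗ (parityOf A.grading).rTensor N.carrier ∘ₗ
            extDiff C A τ N.carrier N.d N.coact) ∘ₗ (parityOf A.grading).rTensor N.carrier := by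
  have hconjugate := DGComodule.rTensor_parityOf_mul_extDiff_mul_rTensor_parityOf (N := N) τ
  simp only [Module.End.mul_eq_comp, LinearMap.comp_assoc] at hconjugate
  rw [DGComodule.extDiff_comp_lTensor_of_intertwines τ _ coneCoact_comp_inl, coneDiff_comp_inl,
    LinearMap.sub_comp, LinearMap.comp_assoc, LinearMap.comp_assoc, LinearMap.comp_assoc,
    hconjugate, LinearMap.lTensor_sub, LinearMap.lTensor_comp, LinearMap.lTensor_comp]
  simp only [LinearMap.comp_add, LinearMap.comp_sub, LinearMap.sub_comp, LinearMap.comp_assoc]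
  abel

theorem extDiff_cone_comp_lTensor_inr :
    extDiff C A τ _ (coneDiff N.d N'.d g) (coneCoact N N') ∘ₗ
        (LinearMap.inr ℚ N.carrier N'.carrier).lTensor A.carrier
      = (LinearMap.inr ℚ _ _).lTensor A.carrier ∘ₗ extDiff C A τ N'.carrier N'.d N'.coact := by
  rw [DGComodule.extDiff_comp_lTensor_of_intertwines τ _ coneCoact_comp_inr, coneDiff_comp_inr,
    DGComodule.extDiff_eq, LinearMap.comp_id, LinearMap.lTensor_comp,
    commute_rTensor_lTensor (parityOf A.grading) N'.d]
  simp only [Module.End.mul_eq_comp, LinearMap.comp_add, LinearMap.comp_sub, LinearMap.comp_assoc]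

theorem coneDiff_extDiff_comp_tensorConeEquiv :
    coneDiff (extDiff C A τ N.carrier N.d N.coact) (extDiff C A τ N'.carrier N'.d N'.coact)
        (g.lTensor A.carrier) ∘ₗ (tensorConeEquiv A N N').toLinearMap
      = (tensorConeEquiv A N N').toLinearMap ∘ₗ
        extDiff C A τ _ (coneDiff N.d N'.d g) (coneCoact N N') := by
  have hPP := A.rTensor_parityOf_mul_rTensor_parityOf (N := N.carrier)
  rw [Module.End.mul_eq_comp, Module.End.one_eq_id] at hPP
  refine tensorProduct_prod_ext ?_ ?_
  · rw [LinearMap.comp_assoc, tensorConeEquiv_comp_lTensor_inl, ← LinearMap.comp_assoc,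
      coneDiff_comp_inl, LinearMap.comp_assoc, extDiff_cone_comp_lTensor_inl,
      ← LinearMap.comp_assoc, LinearMap.comp_sub, ← LinearMap.comp_assoc, ← LinearMap.comp_assoc,
      tensorConeEquiv_comp_lTensor_inl, tensorConeEquiv_comp_lTensor_inr, LinearMap.comp_assoc,
      ← LinearMap.comp_assoc _ _ ((parityOf A.grading).rTensor N.carrier), hPP, LinearMap.id_comp]
  · rw [LinearMap.comp_assoc, tensorConeEquiv_comp_lTensor_inr, coneDiff_comp_inr,
      LinearMap.comp_assoc, extDiff_cone_comp_lTensor_inr, ← LinearMap.comp_assoc,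
      tensorConeEquiv_comp_lTensor_inr]

end ConeTwistedExtension

theorem TwistingChain.apply_eq_zero_of_connective {C : DGCoalgebra} {A : DGAlgebra}
    (τ : TwistingChain C A) (hA : A.Connective) (hC : C.grading 1 = ⊥) {n : ℤ} (hn : n ≤ 1)
    {c : C.carrier} (hc : c ∈ C.grading n) : τ.toFun c = 0 := by
  obtain rfl | hn := hn.eq_or_lt
  · rw [hC, Submodule.mem_bot] at hc
    rw [hc, map_zero]
  · have := τ.mem n c hc
    rwa [hA _ (by omega), Submodule.mem_bot] at this

theorem twisted_extension_preserves_quasiIso_of_boundedBelow_general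
    {C : DGCoalgebra} {A : DGAlgebra} {τ : TwistingChain C A}
    (hτ : ∀ n ≤ 1, ∀ c ∈ C.grading n, τ.toFun c = 0) {N N' : DGComodule C}
    (hN : N.toDGVect.BoundedBelow) (hN' : N'.toDGVect.BoundedBelow)
    {g : N.carrier →ₗ[ℚ] N'.carrier} (hg : IsComoduleHom C N N' g)
    (hq : IsQuasiIso N.d N'.d g) :
    IsQuasiIso (extDiff C A τ N.carrier N.d N.coact) (extDiff C A τ N'.carrier N'.d N'.coact)
      (TensorProduct.map LinearMap.id g) := by
  have hcone : Function.Exact (N.cone N' g hg).d (N.cone N' g hg).d :=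
    hq.exact_coneDiff N.d_sq N'.d_sq hg.2.1
  have hexact := DGComodule.exact_extDiff hτ (DGVect.cone_boundedBelow hg.1 hg.2.1 hN hN') hcone
  have hladder := coneDiff_extDiff_comp_tensorConeEquiv N N' τ g
  exact IsQuasiIso.of_exact_coneDiff
    ((Function.Exact.iff_of_ladder_linearEquiv hladder hladder).2 hexact)

/-! ## Statement 16: twisted extension preserves quasi-isomorphisms of bounded
below comodules -/

/-- Let `C` be a 2-reduced dg coalgebra, `A` a connective dg algebra
and `τ : C ⇝ A` a twisting chain.  If `g : N → N'` is a quasi-isomorphism between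
bounded below left dg `C`-comodules, then the induced map of twisted extensions
`A ⊗_τ N → A ⊗_τ N'` is a quasi-isomorphism. -/
theorem twisted_extension_preserves_quasiIso_of_boundedBelow
    (C : CoaugDGCoalgebra) (hred : C.TwoReduced)
    (A : DGAlgebra) (hA : A.Connective) (τ : TwistingChain C.toDGCoalgebra A)
    (N N' : DGComodule C.toDGCoalgebra)
    (hN : N.toDGVect.BoundedBelow) (hN' : N'.toDGVect.BoundedBelow)
    (g : N.carrier →ₗ[ℚ] N'.carrier) (hg : IsComoduleHom C.toDGCoalgebra N N' g)
    (hq : IsQuasiIso N.d N'.d g) :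
    IsQuasiIso
      (extDiff C.toDGCoalgebra A τ N.carrier N.d N.coact)
      (extDiff C.toDGCoalgebra A τ N'.carrier N'.d N'.coact)
      (TensorProduct.map LinearMap.id g) :=
  twisted_extension_preserves_quasiIso_of_boundedBelow_general
    (fun _ hn _ hc => τ.apply_eq_zero_of_connective hA hred.2 hn hc) hN hN' hg hq

end
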